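/- For the classical Hartogs triangle ℍ = {(z₁,z₂) ∈ ℂ² : |z₁| < |z₂| < 1}, the normalized Bergman kernels k_w = K(·,w)/√K(w,w) do NOT converge weakly to 0 in A²(ℍ) as w → ∂ℍ. Specifically, with g(z) = 1/z₂ ∈ A²(ℍ) and w_j = (1/j², 1/j), the pairing ⟨k_{w_j}, g⟩ = 1/(|w_{j,2}|·...) equals 1/((1/j)·√K(w_j,w_j)) up to modulus, and this does not tend to 0 as j → ∞. -/

import Mathlib

open Complex ComplexConjugate MeasureTheory Filter

/-- The classical Hartogs triangle `ℍ = {(z₁,z₂) : |z₁| < |z₂| < 1}`. -/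
def hartogsTriangle : Set (ℂ × ℂ) :=
  {z | ‖z.1‖ < ‖z.2‖ ∧ ‖z.2‖ < 1}

/-- The Bergman kernel of `ℍ`. -/
noncomputable def bergmanH (z w : ℂ × ℂ) : ℂ :=
  z.2 * conj w.2 /
    ((Real.pi : ℂ) ^ 2 * (1 - z.2 * conj w.2) ^ 2 * (z.2 * conj w.2 - z.1 * conj w.1) ^ 2)

/-- The sequence `w_j = (1/j², 1/j) → (0,0) ∈ ∂ℍ`. -/
noncomputable def wseq (j : ℕ) : ℂ × ℂ := (1 / (j : ℂ) ^ 2, 1 / (j : ℂ))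


lemma polar_inner (f : ℂ → ℂ) (R : ℝ) (hf : ∀ z ∈ Metric.closedBall (0:ℂ) R, DifferentiableAt ℂ f z)
    (r : ℝ) (hr : r ∈ Set.Ioo 0 R) :
    ∫ θ in Set.Ioo (-Real.pi) Real.pi, r • f (Complex.polarCoord.symm (r, θ))
      = ((2 * Real.pi * r : ℝ) : ℂ) * f 0 := by
  have h1 : Real.circleAverage f 0 r = f 0 := by
    have hsub : Metric.closedBall (0:ℂ) |r| ⊆ Metric.closedBall 0 R := by
      apply Metric.closedBall_subset_closedBall
      rw [abs_of_pos hr.1]; exact hr.2.le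
    apply circleAverage_of_differentiable_on_off_countable Set.countable_empty
    · intro z hz
      exact (hf z (hsub hz)).continuousAt.continuousWithinAt
    · intro z hz
      exact hf z (hsub (Metric.ball_subset_closedBall hz.1))
  rw [Real.circleAverage_def] at h1
  have hp : Function.Periodic (fun θ => f (circleMap 0 r θ)) (2 * Real.pi) := fun x => by
    simp [periodic_circleMap 0 r x]
  have h2 := hp.intervalIntegral_add_eq 0 (-Real.pi)
  rw [show (0:ℝ) + 2 * Real.pi = 2 * Real.pi by ring,
    show -Real.pi + 2 * Real.pi = Real.pi by ring] at h2
  rw [h2, intervalIntegral.integral_of_le (by linarith [Real.pi_pos]),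
    integral_Ioc_eq_integral_Ioo] at h1
  have h3 : ∀ θ : ℝ, Complex.polarCoord.symm (r, θ) = circleMap 0 r θ := by
    intro θ
    rw [Complex.polarCoord_symm_apply, circleMap, Complex.exp_mul_I]
    simp
  simp_rw [h3]
  rw [integral_smul, ← h1]
  have := Real.pi_pos.ne'
  simp only [Complex.real_smul]
  push_cast
  have : (Real.pi : ℂ) ≠ 0 := by exact_mod_cast this
  field_simp

lemma disc_mean (f : ℂ → ℂ) (R : ℝ) (hR : 0 < R)
    (hf : ∀ z ∈ Metric.closedBall (0:ℂ) R, DifferentiableAt ℂ f z) :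
    ∫ z in Metric.ball (0:ℂ) R, f z = ((Real.pi * R ^ 2 : ℝ) : ℂ) * f 0 := by
  rw [← integral_indicator Metric.isOpen_ball.measurableSet,
    ← Complex.integral_comp_polarCoord_symm]
  have e1 : (∫ p in polarCoord.target, p.1 • (Metric.ball (0:ℂ) R).indicator f
      (Complex.polarCoord.symm p)) =
      ∫ p in Set.Ioo (0:ℝ) R ×ˢ Set.Ioo (-Real.pi) Real.pi,
        p.1 • f (Complex.polarCoord.symm p) := by
    rw [← integral_indicator polarCoord.open_target.measurableSet,
      ← integral_indicator (measurableSet_Ioo.prod measurableSet_Ioo)]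
    congr 1
    ext p
    by_cases hp : 0 < p.1
    · by_cases hq : p.2 ∈ Set.Ioo (-Real.pi) Real.pi
      · have hn := Complex.norm_polarCoord_symm p
        rw [abs_of_pos hp] at hn
        rw [Set.indicator_of_mem (by rw [polarCoord_target]; exact ⟨hp, hq⟩)]
        by_cases hpr : p.1 < R
        · rw [Set.indicator_of_mem (by rw [mem_ball_zero_iff, hn]; exact hpr),
            Set.indicator_of_mem (show p ∈ Set.Ioo (0:ℝ) R ×ˢ Set.Ioo (-Real.pi) Real.pi from ⟨⟨hp, hpr⟩, hq⟩)]
        · rw [Set.indicator_of_notMem (by rw [mem_ball_zero_iff, hn]; exact hpr),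
            Set.indicator_of_notMem (fun h => hpr h.1.2), smul_zero]
      · rw [Set.indicator_of_notMem (by rw [polarCoord_target]; exact fun h => hq h.2),
          Set.indicator_of_notMem (fun h => hq h.2)]
    · rw [Set.indicator_of_notMem (by rw [polarCoord_target]; exact fun h => hp h.1),
          Set.indicator_of_notMem (fun h => hp h.1.1)]
  rw [e1, Measure.volume_eq_prod, setIntegral_prod]
  · rw [setIntegral_congr_fun measurableSet_Ioo (polar_inner f R hf), integral_mul_const,
      integral_complex_ofReal, ← integral_Ioc_eq_integral_Ioo,
      ← intervalIntegral.integral_of_le hR.le, intervalIntegral.integral_const_mul, integral_id]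
    push_cast
    ring
  · rw [← Measure.volume_eq_prod]
    apply IntegrableOn.mono_set (t := Set.Icc (0:ℝ) R ×ˢ Set.Icc (-Real.pi) Real.pi)
    · apply ContinuousOn.integrableOn_compact (isCompact_Icc.prod isCompact_Icc)
      apply continuousOn_fst.smul
      intro p hp
      have hc : Continuous (fun p : ℝ × ℝ => Complex.polarCoord.symm p) := by
        simp only [Complex.polarCoord_symm_apply]
        fun_prop
      refine (ContinuousAt.comp (f := fun p : ℝ × ℝ => Complex.polarCoord.symm p) (g := f) ?_ hc.continuousAt).continuousWithinAt
      apply (hf _ _).continuousAt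
      rw [mem_closedBall_zero_iff, Complex.norm_polarCoord_symm, abs_of_nonneg hp.1.1]
      exact hp.1.2
    · exact Set.prod_mono Set.Ioo_subset_Icc_self Set.Ioo_subset_Icc_self

lemma meas_hartogs : MeasurableSet hartogsTriangle := by
  apply IsOpen.measurableSet
  have a : IsOpen {z : ℂ × ℂ | ‖z.1‖ < ‖z.2‖} := isOpen_lt (by fun_prop) (by fun_prop)
  have b : IsOpen {z : ℂ × ℂ | ‖z.2‖ < 1} := isOpen_lt (by fun_prop) (by fun_prop)
  exact a.inter b

/-- The integrand. -/
noncomputable def integrandH (w z : ℂ × ℂ) : ℂ := bergmanH z w * conj ((z.2)⁻¹)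

lemma meas_integrandH (w : ℂ × ℂ) : Measurable (integrandH w) := by
  unfold integrandH bergmanH
  have hc : Measurable (fun z : ℂ => conj z) := Complex.continuous_conj.measurable
  have h2 : Measurable (fun z : ℂ × ℂ => conj ((z.2)⁻¹)) := hc.comp measurable_snd.inv
  fun_prop

lemma slice_indicator (w : ℂ × ℂ) (y : ℂ) (hy : ‖y‖ < 1) (x : ℂ) :
    hartogsTriangle.indicator (integrandH w) (x, y) =
      (Metric.ball (0:ℂ) ‖y‖).indicator (fun x => integrandH w (x, y)) x := by
  by_cases hx : ‖x‖ < ‖y‖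
  · rw [Set.indicator_of_mem (show (x, y) ∈ hartogsTriangle from ⟨hx, hy⟩),
      Set.indicator_of_mem (by simpa using hx)]
  · rw [Set.indicator_of_notMem (fun h => hx h.1), Set.indicator_of_notMem (by simpa using hx)]

lemma slice_indicator' (w : ℂ × ℂ) (y : ℂ) (hy : ¬ ‖y‖ < 1) (x : ℂ) :
    hartogsTriangle.indicator (integrandH w) (x, y) = 0 :=
  Set.indicator_of_notMem (fun h => hy h.2) _

lemma bound_integrandH (w : ℂ × ℂ) (hw : w ∈ hartogsTriangle) (x y : ℂ) (hx : ‖x‖ < ‖y‖)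
    (hy : ‖y‖ < 1) :
    ‖integrandH w (x, y)‖ ≤
      (Real.pi ^ 2 * (1 - ‖w.2‖) ^ 2 * (‖w.2‖ - ‖w.1‖) ^ 2)⁻¹ / ‖y‖ ^ 2 := by
  obtain ⟨h1, h2⟩ := hw
  have hy0 : 0 < ‖y‖ := (norm_nonneg x).trans_lt hx
  have hb0 : 0 < ‖w.2‖ := (norm_nonneg _).trans_lt h1
  have hp := Real.pi_pos
  have e1 : 1 - ‖w.2‖ ≤ ‖1 - y * conj w.2‖ := by
    have := norm_sub_norm_le (1:ℂ) (y * conj w.2)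
    rw [norm_one, norm_mul, RCLike.norm_conj] at this
    nlinarith
  have e2 : ‖y‖ * (‖w.2‖ - ‖w.1‖) ≤ ‖y * conj w.2 - x * conj w.1‖ := by
    have := norm_sub_norm_le (y * conj w.2) (x * conj w.1)
    rw [norm_mul, norm_mul, RCLike.norm_conj, RCLike.norm_conj] at this
    nlinarith [mul_le_mul_of_nonneg_right hx.le (norm_nonneg w.1)]
  have e3 : 0 < 1 - ‖w.2‖ := by linarith
  have e4 : 0 < ‖w.2‖ - ‖w.1‖ := by linarith
  have e5 : ‖integrandH w (x, y)‖ = ‖w.2‖ /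
      (Real.pi ^ 2 * ‖1 - y * conj w.2‖ ^ 2 * ‖y * conj w.2 - x * conj w.1‖ ^ 2) := by
    unfold integrandH bergmanH
    simp only [norm_mul, norm_div, norm_pow, RCLike.norm_conj, norm_inv, Complex.norm_real,
      Real.norm_eq_abs, abs_of_pos hp]
    field_simp
  rw [e5, inv_eq_one_div, div_div]
  apply div_le_div₀ zero_le_one h2.le (by positivity)
  calc _ = Real.pi ^ 2 * (1 - ‖w.2‖) ^ 2 * (‖y‖ * (‖w.2‖ - ‖w.1‖)) ^ 2 := by ring
    _ ≤ _ := by gcongr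

lemma integrable_integrandH (w : ℂ × ℂ) (hw : w ∈ hartogsTriangle) :
    Integrable (hartogsTriangle.indicator (integrandH w))
      ((volume : Measure ℂ).prod (volume : Measure ℂ)) := by
  have hm : Measurable (hartogsTriangle.indicator (integrandH w)) :=
    (meas_integrandH w).indicator meas_hartogs
  have hvol : ∀ r : ℝ, 0 ≤ r → (volume : Measure ℂ).real (Metric.ball (0:ℂ) r) = Real.pi * r ^ 2 := by
    intro r hr
    rw [Measure.real, Complex.volume_ball]
    simp [ENNReal.toReal_ofReal hr, mul_comm]
  set C := (Real.pi ^ 2 * (1 - ‖w.2‖) ^ 2 * (‖w.2‖ - ‖w.1‖) ^ 2)⁻¹ with hC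
  have hC0 : 0 ≤ C := by positivity
  rw [integrable_prod_iff' hm.aestronglyMeasurable]
  constructor
  · refine Eventually.of_forall fun y => ?_
    by_cases hy : ‖y‖ < 1
    · simp_rw [slice_indicator w y hy]
      rw [integrable_indicator_iff Metric.isOpen_ball.measurableSet]
      refine Measure.integrableOn_of_bounded (M := C / ‖y‖ ^ 2) measure_ball_lt_top.ne
        ((meas_integrandH w).comp measurable_prodMk_right).aestronglyMeasurable ?_
      refine (ae_restrict_iff' Metric.isOpen_ball.measurableSet).2 (Eventually.of_forall ?_)
      intro x hx
      exact bound_integrandH w hw x y (by simpa using hx) hy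
    · simp_rw [slice_indicator' w y hy]
      exact integrable_zero _ _ _
  · have hsm : StronglyMeasurable (fun y : ℂ =>
        ∫ x, ‖hartogsTriangle.indicator (integrandH w) (x, y)‖) :=
      (hm.norm.stronglyMeasurable).integral_prod_left'
    have hi : Integrable ((Metric.ball (0:ℂ) 1).indicator (fun _ => C * Real.pi)) volume := by
      rw [integrable_indicator_iff Metric.isOpen_ball.measurableSet]
      exact integrableOn_const measure_ball_lt_top.ne
    refine hi.mono' hsm.aestronglyMeasurable (Eventually.of_forall fun y => ?_)
    by_cases hy : ‖y‖ < 1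
    · rw [Set.indicator_of_mem (by simpa using hy)]
      simp_rw [slice_indicator w y hy, norm_indicator_eq_indicator_norm]
      rw [integral_indicator Metric.isOpen_ball.measurableSet]
      refine (norm_setIntegral_le_of_norm_le_const (C := C / ‖y‖ ^ 2) measure_ball_lt_top ?_).trans ?_
      · intro x hx
        rw [norm_norm]
        exact bound_integrandH w hw x y (by simpa using hx) hy
      · rw [hvol _ (norm_nonneg _)]
        by_cases h0 : ‖y‖ = 0
        · rw [h0]; simp; positivity
        · apply le_of_eq; field_simp
    · simp_rw [slice_indicator' w y hy]
      simp [Set.indicator, hy]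

lemma inner_integrandH (w : ℂ × ℂ) (hw : w ∈ hartogsTriangle) (y : ℂ) (hy0 : y ≠ 0) (hy : ‖y‖ < 1) :
    ∫ x, hartogsTriangle.indicator (integrandH w) (x, y) =
      (conj w.2)⁻¹ * (Real.pi : ℂ)⁻¹ * ((1 - y * conj w.2) ^ 2)⁻¹ := by
  obtain ⟨h1, h2⟩ := hw
  have hb0 : 0 < ‖w.2‖ := (norm_nonneg _).trans_lt h1
  have hb : conj w.2 ≠ 0 := by
    rw [← norm_ne_zero_iff, RCLike.norm_conj]; exact hb0.ne'
  have hyp : 0 < ‖y‖ := norm_pos_iff.2 hy0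
  simp_rw [slice_indicator w y hy]
  rw [integral_indicator Metric.isOpen_ball.measurableSet, disc_mean _ _ hyp]
  · have hyy : ((Real.pi * ‖y‖ ^ 2 : ℝ) : ℂ) = Real.pi * (y * conj y) := by
      rw [Complex.mul_conj, Complex.normSq_eq_norm_sq]; push_cast; rfl
    have hcy : conj y ≠ 0 := by simpa using hy0
    have hpi : (Real.pi : ℂ) ≠ 0 := by exact_mod_cast Real.pi_pos.ne'
    have hd : 1 - y * conj w.2 ≠ 0 := by
      intro h
      have : ‖y * conj w.2‖ = 1 := by rw [← sub_eq_zero.1 h, norm_one]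
      rw [norm_mul, RCLike.norm_conj] at this
      nlinarith
    rw [hyy]
    unfold integrandH bergmanH
    simp only [map_inv₀, zero_mul, sub_zero]
    field_simp
  · intro x hx
    rw [mem_closedBall_zero_iff] at hx
    have hd : y * conj w.2 - x * conj w.1 ≠ 0 := by
      intro h
      have := congrArg norm (sub_eq_zero.1 h)
      rw [norm_mul, norm_mul, RCLike.norm_conj, RCLike.norm_conj] at this
      nlinarith [mul_le_mul_of_nonneg_right hx (norm_nonneg w.1), mul_lt_mul_of_pos_left h1 hyp]
    have hd' : 1 - y * conj w.2 ≠ 0 := by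
      intro h
      have : ‖y * conj w.2‖ = 1 := by rw [← sub_eq_zero.1 h, norm_one]
      rw [norm_mul, RCLike.norm_conj] at this
      nlinarith
    have hpi : (Real.pi : ℂ) ≠ 0 := by exact_mod_cast Real.pi_pos.ne'
    unfold integrandH bergmanH
    dsimp only
    refine DifferentiableAt.mul_const (DifferentiableAt.div (by fun_prop) (by fun_prop) ?_) _
    positivity

lemma integral_integrandH (w : ℂ × ℂ) (hw : w ∈ hartogsTriangle) :
    ∫ z in hartogsTriangle, integrandH w z = (conj w.2)⁻¹ := by
  rw [← integral_indicator meas_hartogs, Measure.volume_eq_prod,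
    integral_prod_symm _ (integrable_integrandH w hw)]
  have hae : ∀ᵐ y : ℂ, y ≠ 0 := by
    simp [ae_iff]
  have : (fun y : ℂ => ∫ x, hartogsTriangle.indicator (integrandH w) (x, y)) =ᵐ[volume]
      (Metric.ball (0:ℂ) 1).indicator
        (fun y => (conj w.2)⁻¹ * (Real.pi : ℂ)⁻¹ * ((1 - y * conj w.2) ^ 2)⁻¹) := by
    filter_upwards [hae] with y hy0
    by_cases hy : ‖y‖ < 1
    · rw [inner_integrandH w hw y hy0 hy, Set.indicator_of_mem (by simpa using hy)]
    · simp_rw [slice_indicator' w y hy]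
      rw [Set.indicator_of_notMem (by simpa using hy), integral_zero]
  rw [integral_congr_ae this, integral_indicator Metric.isOpen_ball.measurableSet,
    disc_mean _ _ one_pos]
  · have hpi : (Real.pi : ℂ) ≠ 0 := by exact_mod_cast Real.pi_pos.ne'
    simp
    field_simp
  · intro y hy
    rw [mem_closedBall_zero_iff] at hy
    have hd' : 1 - y * conj w.2 ≠ 0 := by
      intro h
      have : ‖y * conj w.2‖ = 1 := by rw [← sub_eq_zero.1 h, norm_one]
      rw [norm_mul, RCLike.norm_conj] at this
      nlinarith [hw.2, norm_nonneg w.2]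
    have h3 : DifferentiableAt ℂ (fun y : ℂ => (1 - y * conj w.2) ^ 2) y := by fun_prop
    exact (h3.fun_inv (pow_ne_zero 2 hd')).const_mul _

lemma seq_value (j : ℕ) (hj : 2 ≤ j) :
    1 / (‖(wseq j).2‖ * Real.sqrt ((bergmanH (wseq j) (wseq j)).re)) =
      Real.pi * (1 - 1 / (j:ℝ) ^ 2) ^ 2 := by
  have hj' : (2:ℝ) ≤ j := by exact_mod_cast hj
  have hj0 : (0:ℝ) < j := by linarith
  have hjC : (j:ℂ) ≠ 0 := by exact_mod_cast hj0.ne'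
  have hq : (0:ℝ) < 1 - 1 / (j:ℝ) ^ 2 := by
    rw [sub_pos, div_lt_one (by positivity)]; nlinarith
  have hp := Real.pi_pos
  have e : bergmanH (wseq j) (wseq j) =
      (((j:ℝ) / (Real.pi * (1 - 1 / (j:ℝ) ^ 2) ^ 2)) ^ 2 : ℝ) := by
    have hqC : (1 - 1 / (j:ℂ) ^ 2) ≠ 0 := by
      have := Complex.ofReal_ne_zero.2 hq.ne'
      push_cast at this
      exact this
    have hpC : (Real.pi:ℂ) ≠ 0 := by exact_mod_cast hp.ne'
    unfold bergmanH wseq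
    simp only [map_div₀, map_one, map_pow, Complex.conj_natCast]
    push_cast
    have a1 : 1 - 1 / (j:ℂ) * (1 / j) = 1 - 1 / (j:ℂ) ^ 2 := by field_simp
    have a2 : 1 / (j:ℂ) * (1 / j) - 1 / (j:ℂ) ^ 2 * (1 / (j:ℂ) ^ 2)
      = 1 / (j:ℂ) ^ 2 * (1 - 1 / (j:ℂ) ^ 2) := by field_simp
    rw [a1, a2]
    generalize 1 - 1 / (j:ℂ) ^ 2 = q at *
    field_simp
  rw [e, Complex.ofReal_re, Real.sqrt_sq (by positivity)]
  have : ‖(wseq j).2‖ = 1 / j := by simp [wseq]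
  rw [this]
  generalize 1 - 1 / (j:ℝ) ^ 2 = q at *
  field_simp
/-- With `g(z) = 1/z₂ ∈ A²(ℍ)`, the pairing `⟨k_w, g⟩` has modulus `1/(|w₂|√K(w,w))`,
and along `w_j = (1/j², 1/j)` this does not tend to `0`; hence the normalized Bergman
kernels do not converge weakly to `0` at the boundary. -/
theorem stmt12 :
    (∀ w ∈ hartogsTriangle,
      ‖∫ z in hartogsTriangle,
          bergmanH z w / ((Real.sqrt ((bergmanH w w).re) : ℝ) : ℂ) * conj ((z.2)⁻¹)‖ =
        1 / (‖w.2‖ * Real.sqrt ((bergmanH w w).re))) ∧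
    ¬ Tendsto
        (fun j : ℕ =>
          1 / (‖(wseq j).2‖ * Real.sqrt ((bergmanH (wseq j) (wseq j)).re)))
        atTop (nhds 0) := by
  
  constructor
  · intro w hw
    have h := integral_integrandH w hw
    have e : ∀ z : ℂ × ℂ, bergmanH z w / ((Real.sqrt ((bergmanH w w).re) : ℝ) : ℂ) * conj ((z.2)⁻¹)
        = integrandH w z * ((Real.sqrt ((bergmanH w w).re) : ℝ) : ℂ)⁻¹ := by
      intro z; unfold integrandH; ring
    simp_rw [e]
    rw [integral_mul_const, h, norm_mul, norm_inv, norm_inv, RCLike.norm_conj, Complex.norm_real,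
      Real.norm_of_nonneg (Real.sqrt_nonneg _), one_div, mul_inv]
  · intro h
    have h1 : Tendsto (fun j : ℕ => Real.pi * (1 - 1 / (j:ℝ) ^ 2) ^ 2) atTop
        (nhds (Real.pi * (1 - 0) ^ 2)) := by
      refine (((tendsto_const_nhds).sub ?_).pow 2).const_mul _
      exact (tendsto_const_div_pow (1:ℝ) 2 two_ne_zero).comp tendsto_natCast_atTop_atTop
    have h2 := h.congr' (by
      filter_upwards [eventually_ge_atTop 2] with j hj using seq_value j hj)
    have := tendsto_nhds_unique h1 h2
    simp at this
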